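/- arXiv:2409.11048 — 5 statements merged into one kernel-verified Lean document; each statement's English description precedes it below -/
import Mathlib

section
/- (Overbidding.) Let b : [0,v̄] → [0,∞) be strictly increasing and continuous with b(0) = 0, and suppose b is a symmetric equilibrium bid function for the tournament auction, i.e. for all v, ṽ ∈ [0,v̄]: F(v)^{N−1}·∫₀^{min(b(v),w̄)} (v−ξ)g(ξ)dξ ≥ F(ṽ)^{N−1}·∫₀^{min(b(ṽ),w̄)} (v−ξ)g(ξ)dξ. Then b(v) > v for all v ∈ (0,v̄]. -/
/-!
Write `φ(v, β) = ∫₀^{min(β, w̄)} (v - ξ) g(ξ) dξ` for the second-stage payoff and `P = F ^ (N - 1)`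
for the probability of winning the first stage. The function `φ(v, ·)` increases up to `β = v` and
decreases afterwards, so its loss near the maximum is of second order, whereas `P` grows at a
positive linear rate. The bid function is not differentiated: the argument compares a type with
one deviation at a time.

* Weak overbidding. If `b v < v` with `v < v̄`, then by continuity type `v` may imitate a slightly
  higher type whose bid is still at most `v`. This raises the winning probability strictly and does
  not lower the positive second-stage payoff. If `b v̄ < v̄`, any `x` strictly between `b v̄` and `v̄`
  underbids as well, by monotonicity of `b`, which reduces to the previous case.
* Strictness. If `b y = y` with `y > 0`, a type `x` slightly below `y` may imitate `y`. By weak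
  overbidding `x` earns at most `P(x) φ(x, x)`, while imitating `y` yields
  `P(y) φ(x, y) ≥ P(y) (φ(x, x) - C (y - x)²)`. The gain `(P(y) - P(x)) φ(x, x)` is at least linear
  in `y - x` (`winProb_sub_ge` and `F y - F x ≥ m (y - x)`), hence dominates the quadratic loss
  (`payoff_ge_sub_sq`).
-/

open MeasureTheory intervalIntegral Set Filter

/-- The second-stage payoff of a finalist with value `v` and bid `β` against an opponent whose value
has density `g` on `[0, w]`. -/
noncomputable def payoff (g : ℝ → ℝ) (w v β : ℝ) : ℝ :=
  ∫ ξ in (0:ℝ)..(min β w), (v - ξ) * g ξ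

lemma payoff_intervalIntegrable {g : ℝ → ℝ} {w : ℝ} (hg : ContinuousOn g (Icc 0 w)) (v : ℝ)
    {p q : ℝ} (hp : p ∈ Icc 0 w) (hq : q ∈ Icc 0 w) :
    IntervalIntegrable (fun ξ => (v - ξ) * g ξ) volume p q := by
  apply ContinuousOn.intervalIntegrable
  have h : uIcc p q ⊆ Icc 0 w := by
    intro t ht
    rcases mem_uIcc.1 ht with h | h
    · exact ⟨hp.1.trans h.1, h.2.trans hq.2⟩
    · exact ⟨hq.1.trans h.1, h.2.trans hp.2⟩
  exact (ContinuousOn.mul (by fun_prop) (hg.mono h))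

lemma payoff_sub {g : ℝ → ℝ} {w : ℝ} (hw : 0 < w) (hg : ContinuousOn g (Icc 0 w)) (v : ℝ)
    {a c : ℝ} (ha : 0 ≤ a) (hc : 0 ≤ c) :
    payoff g w v c - payoff g w v a = ∫ ξ in (min a w)..(min c w), (v - ξ) * g ξ := by
  have h0 : (0:ℝ) ∈ Icc 0 w := ⟨le_rfl, hw.le⟩
  have ha' : min a w ∈ Icc 0 w := ⟨le_min ha hw.le, min_le_right _ _⟩
  have hc' : min c w ∈ Icc 0 w := ⟨le_min hc hw.le, min_le_right _ _⟩
  exact integral_interval_sub_left (payoff_intervalIntegrable hg v h0 hc')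
    (payoff_intervalIntegrable hg v h0 ha')

lemma payoff_mono {g : ℝ → ℝ} {w : ℝ} (hw : 0 < w) (hg : ContinuousOn g (Icc 0 w))
    (hpos : ∀ x ∈ Icc 0 w, 0 < g x) {v a c : ℝ} (ha : 0 ≤ a) (hac : a ≤ c) (hc : c ≤ v) :
    payoff g w v a ≤ payoff g w v c := by
  have h := payoff_sub hw hg v ha (ha.trans hac)
  have h2 : 0 ≤ ∫ ξ in (min a w)..(min c w), (v - ξ) * g ξ := by
    apply integral_nonneg (min_le_min_right w hac)
    intro ξ hξ
    have h1 : 0 ≤ min a w := le_min ha hw.le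
    have h2 := hpos ξ ⟨h1.trans hξ.1, hξ.2.trans (min_le_right _ _)⟩
    exact mul_nonneg (by linarith [hξ.2, min_le_left c w]) h2.le
  linarith

lemma payoff_anti {g : ℝ → ℝ} {w : ℝ} (hw : 0 < w) (hg : ContinuousOn g (Icc 0 w))
    (hpos : ∀ x ∈ Icc 0 w, 0 < g x) {v c : ℝ} (hv : 0 ≤ v) (hc : v ≤ c) :
    payoff g w v c ≤ payoff g w v v := by
  rcases le_total v w with hvw | hwv
  · have h := payoff_sub hw hg v hv (hv.trans hc)
    rw [min_eq_left hvw] at h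
    have h2 : 0 ≤ -∫ ξ in v..(min c w), (v - ξ) * g ξ := by
      rw [← intervalIntegral.integral_neg]
      apply integral_nonneg (le_min hc hvw)
      intro ξ hξ
      have h2 := hpos ξ ⟨hv.trans hξ.1, hξ.2.trans (min_le_right _ _)⟩
      nlinarith [hξ.1]
    linarith
  · simp [payoff, min_eq_right hwv, min_eq_right (hwv.trans hc)]

lemma payoff_pos {g : ℝ → ℝ} {w : ℝ} (hw : 0 < w) (hg : ContinuousOn g (Icc 0 w))
    (hpos : ∀ x ∈ Icc 0 w, 0 < g x) {v c : ℝ} (hc : 0 < c) (hcv : c ≤ v) :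
    0 < payoff g w v c := by
  have h0 : 0 < min c w := lt_min hc hw
  apply intervalIntegral_pos_of_pos_on
    (payoff_intervalIntegrable hg v ⟨le_rfl, hw.le⟩ ⟨h0.le, min_le_right _ _⟩) _ h0
  intro ξ hξ
  have h1 := hpos ξ ⟨hξ.1.le, hξ.2.le.trans (min_le_right _ _)⟩
  exact mul_pos (by linarith [hξ.2, min_le_left c w]) h1

lemma payoff_mono_value {g : ℝ → ℝ} {w : ℝ} (hw : 0 < w) (hg : ContinuousOn g (Icc 0 w))
    (hpos : ∀ x ∈ Icc 0 w, 0 < g x) {u v c : ℝ} (hc : 0 ≤ c) (huv : u ≤ v) :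
    payoff g w u c ≤ payoff g w v c := by
  have h0 : 0 ≤ min c w := le_min hc hw.le
  have hi : ∀ t, IntervalIntegrable (fun ξ => (t - ξ) * g ξ) volume 0 (min c w) := fun t =>
    payoff_intervalIntegrable hg t ⟨le_rfl, hw.le⟩ ⟨h0, min_le_right _ _⟩
  apply integral_mono_on h0 (hi u) (hi v)
  intro ξ hξ
  have h1 := hpos ξ ⟨hξ.1, hξ.2.trans (min_le_right _ _)⟩
  exact mul_le_mul_of_nonneg_right (by linarith) h1.le

/-- Bidding `y` instead of the optimal bid `x` costs a type `x` at most a quadratic amount. -/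
lemma payoff_ge_sub_sq {g : ℝ → ℝ} {w : ℝ} (hw : 0 < w) (hg : ContinuousOn g (Icc 0 w))
    (hpos : ∀ x ∈ Icc 0 w, 0 < g x) {C : ℝ} (hC : ∀ x ∈ Icc 0 w, g x ≤ C) {x y : ℝ}
    (hx : 0 ≤ x) (hxy : x ≤ y) :
    payoff g w x x - C * (y - x) ^ 2 ≤ payoff g w x y := by
  have h := payoff_sub hw hg x hx (hx.trans hxy)
  have hle : min x w ≤ min y w := min_le_min_right w hxy
  have hC0 : 0 ≤ C := (hpos 0 ⟨le_rfl, hw.le⟩).le.trans (hC 0 ⟨le_rfl, hw.le⟩)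
  have hb : ‖∫ ξ in (min x w)..(min y w), (x - ξ) * g ξ‖ ≤
      (y - x) * C * |min y w - min x w| := by
    apply intervalIntegral.norm_integral_le_of_norm_le_const
    intro ξ hξ
    rw [uIoc_of_le hle] at hξ
    have hξw : ξ ≤ w := hξ.2.trans (min_le_right _ _)
    have hξy : ξ ≤ y := hξ.2.trans (min_le_left _ _)
    have hξx : x < ξ := by
      rcases min_lt_iff.1 hξ.1 with h | h
      · exact h
      · linarith
    have hmem : ξ ∈ Icc 0 w := ⟨hx.trans hξx.le, hξw⟩
    rw [norm_mul, Real.norm_eq_abs, Real.norm_eq_abs, abs_of_pos (hpos ξ hmem),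
      abs_of_neg (by linarith)]
    exact mul_le_mul (by linarith) (hC ξ hmem) (hpos ξ hmem).le (by linarith)
  have hlen : |min y w - min x w| ≤ y - x := by
    have h1 := abs_min_sub_min_le_max y w x w
    rwa [sub_self w, abs_zero, max_eq_left (abs_nonneg _),
      abs_of_nonneg (sub_nonneg.2 hxy)] at h1
  have h2 : (y - x) * C * |min y w - min x w| ≤ (y - x) * C * (y - x) :=
    mul_le_mul_of_nonneg_left hlen (mul_nonneg (by linarith) hC0)
  have h3 := (abs_le.1 (hb.trans h2)).1
  nlinarith

lemma cdf_sub_ge {f : ℝ → ℝ} {V : ℝ} (hf : ContinuousOn f (Icc 0 V)) {m : ℝ}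
    (hm : ∀ x ∈ Icc 0 V, m ≤ f x) {x y : ℝ} (hx : 0 ≤ x) (hxy : x ≤ y) (hy : y ≤ V) :
    m * (y - x) ≤ (∫ ξ in (0:ℝ)..y, f ξ) - ∫ ξ in (0:ℝ)..x, f ξ := by
  have hi : ∀ p q : ℝ, 0 ≤ p → p ≤ q → q ≤ V → IntervalIntegrable f volume p q := by
    intro p q hp hpq hq
    apply ContinuousOn.intervalIntegrable
    rw [uIcc_of_le hpq]
    exact hf.mono (Icc_subset_Icc hp hq)
  rw [integral_interval_sub_left (hi 0 y le_rfl (hx.trans hxy) hy)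
    (hi 0 x le_rfl hx (hxy.trans hy))]
  have h := integral_mono_on hxy (intervalIntegrable_const (c := m)) (hi x y hx hxy hy)
    (fun ξ hξ => hm ξ ⟨hx.trans hξ.1, hξ.2.trans hy⟩)
  rw [intervalIntegral.integral_const, smul_eq_mul] at h
  linarith

lemma winProb_sub_ge {p q : ℝ} (hp : 0 ≤ p) (hpq : p ≤ q) (k : ℕ) :
    (q - p) * q ^ k ≤ q ^ (k + 1) - p ^ (k + 1) := by
  have h : p ^ k ≤ q ^ k := pow_le_pow_left₀ hp hpq k
  rw [pow_succ, pow_succ]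
  nlinarith [mul_le_mul_of_nonneg_right h hp]

/-- (Overbidding.) Let `b : [0, v̄] → [0,∞)` be strictly increasing and
continuous with `b 0 = 0`, and suppose `b` is a symmetric equilibrium bid function for the
tournament auction: for all `v, ṽ ∈ [0, v̄]`,
`F(v)^{N−1} ∫₀^{min (b v) w̄} (v−ξ) g ξ dξ ≥ F(ṽ)^{N−1} ∫₀^{min (b ṽ) w̄} (v−ξ) g ξ dξ`.
Then `b v > v` for all `v ∈ (0, v̄]`. -/
theorem stmt10
    (wbar vbar : ℝ) (hwbar : 0 < wbar) (hvbar : 0 < vbar)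
    (g : ℝ → ℝ)
    (hg_cont : ContinuousOn g (Set.Icc 0 wbar))
    (hg_pos : ∀ x ∈ Set.Icc 0 wbar, 0 < g x)
    (hg_int : (∫ ξ in (0:ℝ)..wbar, g ξ) = 1)
    (f : ℝ → ℝ)
    (hf_cont : ContinuousOn f (Set.Icc 0 vbar))
    (hf_pos : ∀ x ∈ Set.Icc 0 vbar, 0 < f x)
    (hf_int : (∫ ξ in (0:ℝ)..vbar, f ξ) = 1)
    (F : ℝ → ℝ) (hF : ∀ v, F v = ∫ ξ in (0:ℝ)..v, f ξ)
    (N : ℕ) (hN : 2 ≤ N)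
    (hmean : vbar ≤ ∫ ξ in (0:ℝ)..wbar, ξ * g ξ)
    (b : ℝ → ℝ)
    (hb_mono : StrictMonoOn b (Set.Icc 0 vbar))
    (hb_cont : ContinuousOn b (Set.Icc 0 vbar))
    (hb0 : b 0 = 0)
    (hb_nonneg : ∀ v ∈ Set.Icc 0 vbar, 0 ≤ b v)
    (heq : ∀ v ∈ Set.Icc 0 vbar, ∀ vtil ∈ Set.Icc 0 vbar,
      F vtil ^ (N - 1) * ∫ ξ in (0:ℝ)..(min (b vtil) wbar), (v - ξ) * g ξ ≤
      F v ^ (N - 1) * ∫ ξ in (0:ℝ)..(min (b v) wbar), (v - ξ) * g ξ) :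
    ∀ v ∈ Set.Ioc 0 vbar, v < b v := by
  obtain ⟨k, rfl⟩ : ∃ k, N = k + 2 := ⟨N - 2, by omega⟩
  have hk : k + 2 - 1 = k + 1 := rfl
  rw [hk] at heq
  -- the equilibrium condition in terms of `payoff`
  have heq' : ∀ v ∈ Icc 0 vbar, ∀ x ∈ Icc 0 vbar,
      F x ^ (k + 1) * payoff g wbar v (b x) ≤ F v ^ (k + 1) * payoff g wbar v (b v) := heq
  obtain ⟨m, hm0, hm⟩ : ∃ m, 0 < m ∧ ∀ x ∈ Icc 0 vbar, m ≤ f x := by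
    obtain ⟨z, hz, hmin⟩ := isCompact_Icc.exists_isMinOn (nonempty_Icc.2 hvbar.le) hf_cont
    exact ⟨f z, hf_pos z hz, fun x hx => hmin hx⟩
  obtain ⟨C, hC0, hC⟩ : ∃ C, 0 < C ∧ ∀ x ∈ Icc 0 wbar, g x ≤ C := by
    obtain ⟨z, hz, hmax⟩ := isCompact_Icc.exists_isMaxOn (nonempty_Icc.2 hwbar.le) hg_cont
    exact ⟨g z, hg_pos z hz, fun x hx => hmax hx⟩
  have hFsub : ∀ x y, 0 ≤ x → x ≤ y → y ≤ vbar → m * (y - x) ≤ F y - F x := by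
    intro x y hx hxy hy
    rw [hF, hF]
    exact cdf_sub_ge hf_cont hm hx hxy hy
  have hF0 : F 0 = 0 := by rw [hF, integral_same]
  have hFpos : ∀ y, 0 < y → y ≤ vbar → 0 < F y := by
    intro y hy0 hy
    have h1 := hFsub 0 y le_rfl hy0.le hy
    have h2 : 0 < m * (y - 0) := mul_pos hm0 (by linarith)
    linarith
  have hbpos : ∀ y, 0 < y → y ≤ vbar → 0 < b y := by
    intro y hy0 hy
    have h := hb_mono ⟨le_rfl, hvbar.le⟩ ⟨hy0.le, hy⟩ hy0
    rwa [hb0] at h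
  have hweak : ∀ v, 0 < v → v < vbar → v ≤ b v := by
    intro v hv0 hv
    by_contra! hlt
    have hvmem : v ∈ Icc 0 vbar := ⟨hv0.le, hv.le⟩
    obtain ⟨x, hvx, hxV, hbx⟩ : ∃ x, v < x ∧ x ≤ vbar ∧ b x < v := by
      have hc : ContinuousWithinAt b (Ioc v vbar) v :=
        (hb_cont v hvmem).mono fun t ht => ⟨hv0.le.trans ht.1.le, ht.2⟩
      have hev : ∀ᶠ x in nhdsWithin v (Ioc v vbar), b x < v := hc.eventually_lt_const hlt
      rw [nhdsWithin_Ioc_eq_nhdsGT hv] at hev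
      obtain ⟨x, hx, hx2⟩ := (hev.and (Ioc_mem_nhdsGT hv)).exists
      exact ⟨x, hx2.1, hx2.2, hx⟩
    have hxmem : x ∈ Icc 0 vbar := ⟨(hv0.trans hvx).le, hxV⟩
    have h1 := heq' v hvmem x hxmem
    have h2 := payoff_mono hwbar hg_cont hg_pos (v := v) (hb_nonneg v hvmem)
      (hb_mono hvmem hxmem hvx).le hbx.le
    have h3 := payoff_pos hwbar hg_cont hg_pos (v := v) (hbpos x (hv0.trans hvx) hxV) hbx.le
    have h4 : F v < F x := by
      have := hFsub v x hv0.le hvx.le hxV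
      have : 0 < m * (x - v) := mul_pos hm0 (by linarith)
      linarith
    have h5 : F v ^ (k + 1) < F x ^ (k + 1) :=
      pow_lt_pow_left₀ h4 (hFpos v hv0 hv.le).le (Nat.succ_ne_zero k)
    have h6 := mul_le_mul_of_nonneg_left h2 (pow_nonneg (hFpos v hv0 hv.le).le (k + 1))
    have h7 := mul_lt_mul_of_pos_right h5 h3
    linarith
  intro y hy
  by_contra! hby
  have hymem : y ∈ Icc 0 vbar := ⟨hy.1.le, hy.2⟩
  have hyb : b y = y := by
    refine le_antisymm hby ?_
    by_contra! hlt
    -- a type strictly between `b y` and `y` would underbid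
    obtain ⟨x, hx1, hx2⟩ := exists_between hlt
    have hx0 : 0 < x := (hbpos y hy.1 hy.2).trans hx1
    have h1 := hweak x hx0 (hx2.trans_le hy.2)
    have h2 := hb_mono ⟨hx0.le, hx2.le.trans hy.2⟩ hymem hx2
    linarith
  have hFy := hFpos y hy.1 hy.2
  set c := payoff g wbar (y / 2) (y / 2) with hc
  have hc0 : 0 < c := payoff_pos hwbar hg_cont hg_pos (by linarith [hy.1]) le_rfl
  -- `d` is the gap `y - x`, small enough that the linear gain `m * c * d` beats the quadratic loss
  obtain ⟨d, hd0, hdy, hd⟩ : ∃ d, 0 < d ∧ d ≤ y / 2 ∧ F y * C * d < m * c := by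
    have hFC : 0 < F y * C := mul_pos hFy hC0
    have hq : 0 < m * c / (2 * (F y * C)) := by positivity
    refine ⟨min (y / 2) (m * c / (2 * (F y * C))), lt_min (by linarith [hy.1]) hq,
      min_le_left _ _, ?_⟩
    calc F y * C * min (y / 2) (m * c / (2 * (F y * C)))
        ≤ F y * C * (m * c / (2 * (F y * C))) :=
          mul_le_mul_of_nonneg_left (min_le_right _ _) hFC.le
      _ = m * c / 2 := by field_simp
      _ < m * c := half_lt_self (mul_pos hm0 hc0)
  obtain ⟨x, hxd⟩ : ∃ x, x = y - d := ⟨_, rfl⟩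
  have hy0 := hy.1
  have hx2 : y / 2 ≤ x := by linarith
  have hx0 : 0 < x := by linarith
  have hxy : x < y := by linarith
  have hxV : x < vbar := hxy.trans_le hy.2
  have hxmem : x ∈ Icc 0 vbar := ⟨hx0.le, hxV.le⟩
  have hFx := hFpos x hx0 hxV.le
  have hcx : c ≤ payoff g wbar x x :=
    (payoff_mono_value hwbar hg_cont hg_pos (by linarith) hx2).trans
      (payoff_mono hwbar hg_cont hg_pos (by linarith) hx2 le_rfl)
  have h1 := heq' x hxmem y hymem
  rw [hyb] at h1
  have h2 := payoff_anti hwbar hg_cont hg_pos hx0.le (hweak x hx0 hxV)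
  have h3 := payoff_ge_sub_sq hwbar hg_cont hg_pos hC hx0.le hxy.le
  have hyx : y - x = d := by linarith
  have h4 := hFsub x y hx0.le hxy.le hy.2
  rw [hyx] at h3 h4
  have hmd : 0 < m * d := mul_pos hm0 hd0
  have h5 := winProb_sub_ge hFx.le (by linarith : F x ≤ F y) k
  have hK : 0 < F y ^ k := pow_pos hFy k
  have hKs : F y ^ (k + 1) = F y ^ k * F y := pow_succ _ _
  have h6 := mul_le_mul_of_nonneg_left h2 (pow_pos hFx (k + 1)).le
  have h7 := mul_le_mul_of_nonneg_left h3 (pow_pos hFy (k + 1)).le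
  have hgain : F y ^ k * (m * d * c) ≤ (F y ^ (k + 1) - F x ^ (k + 1)) * payoff g wbar x x := by
    have h8 : F y ^ k * (m * d) ≤ F y ^ (k + 1) - F x ^ (k + 1) := by
      nlinarith [mul_le_mul_of_nonneg_right h4 hK.le]
    calc F y ^ k * (m * d * c) = F y ^ k * (m * d) * c := by ring
      _ ≤ _ := mul_le_mul h8 hcx hc0.le ((mul_pos hK hmd).le.trans h8)
  have hloss : (F y ^ (k + 1) - F x ^ (k + 1)) * payoff g wbar x x ≤
      F y ^ k * (F y * C * d * d) := by
    have h9 : F y ^ (k + 1) * (C * d ^ 2) = F y ^ k * (F y * C * d * d) := by rw [hKs]; ring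
    linarith
  have hfin : m * d * c ≤ F y * C * d * d := le_of_mul_le_mul_left (hgain.trans hloss) hK
  nlinarith [mul_lt_mul_of_pos_right hd hd0]
end

section
/- Let k > 0 and let (G_l) be a sequence of nondecreasing continuous functions G_l : [0,∞) → [0,1] with G_l(c) > 0 for every c > 0. Then the following are equivalent: (a) for all 0 < c₁ < c₂ < k, (G_l(c₂) − G_l(c₁))/G_l(c₂) → 0 as l → ∞; (b) for every c ∈ (0,k), ∫₀^{c} (1 − G_l(ξ)/G_l(c)) dξ → 0 as l → ∞. (When G_l is the CDF of a nonnegative random variable w_l, the integral in (b) equals the conditional expectation E[w_l | w_l ≤ c].) -/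
/-!
Fix `c` and put `f_l ξ = 1 - G_l ξ / G_l c` on `[0, c]`; it is continuous, nonincreasing and takes
values in `[0, 1]`. Condition (a) is pointwise convergence `f_l → 0` on `(0, c)`, so (a) gives (b)
by dominated convergence with bound `1`. Conversely, monotonicity gives the Markov-type inequality
`c₁ * f_l c₁ ≤ ∫₀^{c₁} f_l ≤ ∫₀^c f_l`, so (b) forces `f_l c₁ → 0`.
-/

open MeasureTheory intervalIntegral Set Filter

/-- Let `k > 0` and let `(G_l)` be a sequence of nondecreasing continuous
functions `G_l : [0,∞) → [0,1]` with `G_l c > 0` for every `c > 0`. Then the following are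
equivalent: (a) for all `0 < c₁ < c₂ < k`, `(G_l c₂ − G_l c₁)/G_l c₂ → 0` as `l → ∞`;
(b) for every `c ∈ (0,k)`, `∫₀^c (1 − G_l ξ / G_l c) dξ → 0` as `l → ∞` (when `G_l` is the
CDF of a nonnegative random variable `w_l`, the latter integral equals `E[w_l | w_l ≤ c]`). -/
theorem stmt11
    (k : ℝ) (hk : 0 < k)
    (G : ℕ → ℝ → ℝ)
    (hG_cont : ∀ l, ContinuousOn (G l) (Set.Ici 0))
    (hG_mono : ∀ l, MonotoneOn (G l) (Set.Ici 0))
    (hG_range : ∀ l, ∀ x, 0 ≤ x → G l x ∈ Set.Icc (0:ℝ) 1)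
    (hG_pos : ∀ l, ∀ c, 0 < c → 0 < G l c) :
    (∀ c₁ c₂, 0 < c₁ → c₁ < c₂ → c₂ < k →
      Filter.Tendsto (fun l => (G l c₂ - G l c₁) / G l c₂) Filter.atTop (nhds 0)) ↔
    (∀ c ∈ Set.Ioo 0 k,
      Filter.Tendsto (fun l => ∫ ξ in (0:ℝ)..c, (1 - G l ξ / G l c)) Filter.atTop (nhds 0)) := by
  have f_cont : ∀ l c, 0 < c → ContinuousOn (fun ξ => 1 - G l ξ / G l c) (Set.Icc 0 c) := by
    intro l c hc
    exact continuousOn_const.sub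
      (((hG_cont l).mono Set.Icc_subset_Ici_self).div_const _)
  have f_nonneg : ∀ l c ξ, 0 < c → 0 ≤ ξ → ξ ≤ c → 0 ≤ 1 - G l ξ / G l c := by
    intro l c ξ hc h0 h1
    have h := hG_mono l (Set.mem_Ici.2 h0) (Set.mem_Ici.2 hc.le) h1
    have := (div_le_one (hG_pos l c hc)).2 h
    linarith
  have f_eq : ∀ l c c₁, 0 < c → 1 - G l c₁ / G l c = (G l c - G l c₁) / G l c := by
    intro l c c₁ hc
    rw [sub_div, div_self (hG_pos l c hc).ne']
  constructor
  · rintro ha c ⟨hc, hck⟩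
    have key := intervalIntegral.tendsto_integral_filter_of_dominated_convergence
      (μ := volume) (a := (0:ℝ)) (b := c) (l := Filter.atTop)
      (F := fun l ξ => 1 - G l ξ / G l c) (f := fun _ => (0:ℝ)) (fun _ => (1:ℝ)) ?_ ?_ ?_ ?_
    · simpa using key
    · refine Filter.Eventually.of_forall fun l => ?_
      rw [Set.uIoc_of_le hc.le]
      exact ((f_cont l c hc).mono Set.Ioc_subset_Icc_self).aestronglyMeasurable measurableSet_Ioc
    · refine Filter.Eventually.of_forall fun l => Filter.Eventually.of_forall fun ξ hξ => ?_
      rw [Set.uIoc_of_le hc.le] at hξ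
      rw [Real.norm_of_nonneg (f_nonneg l c ξ hc hξ.1.le hξ.2)]
      have := div_nonneg (hG_range l ξ hξ.1.le).1 (hG_pos l c hc).le
      linarith
    · exact intervalIntegrable_const
    · refine Filter.Eventually.of_forall fun ξ hξ => ?_
      rw [Set.uIoc_of_le hc.le] at hξ
      simp only [f_eq _ c _ hc]
      rcases hξ.2.lt_or_eq with h | rfl
      · exact ha ξ c hξ.1 h hck
      · simp
  · intro hb c₁ c₂ h1 h12 h2k
    have h2 : 0 < c₂ := h1.trans h12
    have hlim := (hb c₂ ⟨h2, h2k⟩).div_const c₁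
    rw [zero_div] at hlim
    refine squeeze_zero (fun l => ?_) (fun l => ?_) hlim
    · rw [← f_eq l c₂ c₁ h2]
      exact f_nonneg l c₂ c₁ h2 h1.le h12.le
    · rw [← f_eq l c₂ c₁ h2, le_div_iff₀ h1]
      have hint1 : IntervalIntegrable (fun ξ => 1 - G l ξ / G l c₂) volume 0 c₁ :=
        ((f_cont l c₂ h2).mono (Set.Icc_subset_Icc_right h12.le)).intervalIntegrable_of_Icc h1.le
      have hint2 : IntervalIntegrable (fun ξ => 1 - G l ξ / G l c₂) volume c₁ c₂ :=
        ((f_cont l c₂ h2).mono (Set.Icc_subset_Icc_left h1.le)).intervalIntegrable_of_Icc h12.le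
      have hA : (1 - G l c₁ / G l c₂) * c₁ ≤ ∫ ξ in (0:ℝ)..c₁, (1 - G l ξ / G l c₂) := by
        have h : (∫ _ in (0:ℝ)..c₁, (1 - G l c₁ / G l c₂))
            ≤ ∫ ξ in (0:ℝ)..c₁, (1 - G l ξ / G l c₂) := by
          refine intervalIntegral.integral_mono_on h1.le intervalIntegrable_const hint1
            fun ξ hξ => ?_
          have := hG_mono l (Set.mem_Ici.2 hξ.1) (Set.mem_Ici.2 h1.le) hξ.2
          have := div_le_div_of_nonneg_right this (hG_pos l c₂ h2).le
          linarith
        rw [intervalIntegral.integral_const, smul_eq_mul, sub_zero] at h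
        linarith
      have hB : 0 ≤ ∫ ξ in c₁..c₂, (1 - G l ξ / G l c₂) :=
        intervalIntegral.integral_nonneg h12.le fun ξ hξ =>
          f_nonneg l c₂ ξ h2 (h1.le.trans hξ.1) hξ.2
      have hC := intervalIntegral.integral_add_adjacent_intervals hint1 hint2
      linarith
end

section
/- (Approximating Sequence.) Assume the second-price-with-reserve setting below with A ∈ [0,v̄]. Then: (i) there exists a sequence of reserve prices r_l ∈ [v̄, k) such that lim_{l→∞} R_l(r_l) = k; (ii) for any sequence r_l ∈ [v̄, ∞) with lim_{l→∞} R_l(r_l) = k, one must have lim_{l→∞} r_l = k. -/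
/-!
Since `A ≤ vbar ≤ r`, the revenue `R_l(r)` is a convex combination of `A` and `r`, so
`R_l(r) ≤ r`.

For (i), choose `r_l ∈ [vbar, k)` maximizing `R_l` there up to an error `1 / (l + 1)`. Then
`R_l(r_l) ≤ r_l < k`, while for each small fixed `ε` we have
`R_l(r_l) ≥ R_l(k - ε) - 1 / (l + 1) → k - ε`. Near-maximization replaces the usual diagonal choice
of `ε_l → 0`.

For (ii), the bound `R_l(r_l) ≤ r_l` keeps `r_l` from dropping below `k` in the limit. If
`r_l ≥ k + ε`, then `R_l(r_l) ≤ A + (1 - G_l(k + ε)) M`, because no sale above the price `M` is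
possible; the right side tends to `A < k`, so this happens only finitely often.
-/

open MeasureTheory Set Filter

/-- (Approximating Sequence.) In the second-price-with-reserve setting —
`G_l` the continuous CDF of the strong bidder's value `w_l ∈ [0, M]`, converging in
distribution to the constant `k > v̄`, and expected revenue
`R_l(r) = G_l(r)·A + (1 − G_l(r))·r` for a reserve price `r ≥ v̄`, where
`A = E[v_{2:N}] ∈ [0, v̄]` — then: (i) there exists a sequence of reserve prices
`r_l ∈ [v̄, k)` with `R_l(r_l) → k`; (ii) any sequence of reserve prices `r_l ≥ v̄` with
`R_l(r_l) → k` must satisfy `r_l → k`. -/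
theorem stmt16
    (vbar k M A : ℝ) (h1 : 0 < vbar) (h2 : vbar < k) (h3 : k ≤ M)
    (hA : A ∈ Set.Icc 0 vbar)
    (G : ℕ → ℝ → ℝ)
    (hG_cont : ∀ l, Continuous (G l))
    (hG_mono : ∀ l, Monotone (G l))
    (hG_range : ∀ l x, G l x ∈ Set.Icc (0:ℝ) 1)
    (hG_zero : ∀ l, ∀ x < 0, G l x = 0)
    (hG_one : ∀ l, ∀ x, M ≤ x → G l x = 1)
    (hconv : ∀ ε ∈ Set.Ioo 0 k,
      Filter.Tendsto (fun l => G l (k - ε)) Filter.atTop (nhds 0) ∧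
      Filter.Tendsto (fun l => G l (k + ε)) Filter.atTop (nhds 1))
    (R : ℕ → ℝ → ℝ)
    (hR : ∀ l r, R l r = G l r * A + (1 - G l r) * r) :
    (∃ r : ℕ → ℝ, (∀ l, r l ∈ Set.Ico vbar k) ∧
      Filter.Tendsto (fun l => R l (r l)) Filter.atTop (nhds k)) ∧
    (∀ r : ℕ → ℝ, (∀ l, vbar ≤ r l) →
      Filter.Tendsto (fun l => R l (r l)) Filter.atTop (nhds k) →
      Filter.Tendsto r Filter.atTop (nhds k)) := by
  obtain ⟨hA0, hAv⟩ := hA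
  have hle : ∀ l r, vbar ≤ r → R l r ≤ r := by
    intro l r hr
    rw [hR]
    nlinarith [(hG_range l r).1]
  constructor
  · have hbdd : ∀ l, BddAbove (R l '' Set.Ico vbar k) := by
      rintro l
      refine ⟨k, ?_⟩
      rintro _ ⟨r, hr, rfl⟩
      exact (hle l r hr.1).trans hr.2.le
    have hnear : ∀ l : ℕ, ∃ r ∈ Set.Ico vbar k,
        ∀ s ∈ Set.Ico vbar k, R l s - 1 / ((l : ℝ) + 1) < R l r := by
      intro l
      have hpos : (0 : ℝ) < 1 / ((l : ℝ) + 1) := by positivity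
      have hne : (R l '' Set.Ico vbar k).Nonempty := ⟨_, vbar, ⟨le_rfl, h2⟩, rfl⟩
      obtain ⟨_, ⟨r, hr, rfl⟩, hlt⟩ := exists_lt_of_lt_csSup hne (sub_lt_self _ hpos)
      refine ⟨r, hr, fun s hs => ?_⟩
      have := le_csSup (hbdd l) (Set.mem_image_of_mem (R l) hs)
      linarith
    choose r hr hrmax using hnear
    refine ⟨r, hr, tendsto_order.2 ⟨fun a ha => ?_, fun a ha => ?_⟩⟩
    · -- The second term of the minimum keeps `k - ε` an admissible reserve price.
      obtain ⟨ε, hε⟩ : ∃ ε, ε = min ((k - a) / 2) (k - vbar) := ⟨_, rfl⟩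
      have hε0 : 0 < ε := by rw [hε]; exact lt_min (by linarith) (by linarith)
      have hε1 : ε ≤ (k - a) / 2 := hε ▸ min_le_left _ _
      have hε2 : ε ≤ k - vbar := hε ▸ min_le_right _ _
      have hG := (hconv ε ⟨hε0, by linarith⟩).1
      have hlim : Tendsto (fun l : ℕ => R l (k - ε) - 1 / ((l : ℝ) + 1)) atTop
          (nhds (0 * A + (1 - 0) * (k - ε) - 0)) := by
        simp only [hR]
        exact ((hG.mul_const A).add ((hG.const_sub 1).mul_const (k - ε))).sub
          tendsto_one_div_add_atTop_nhds_zero_nat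
      filter_upwards [hlim.eventually_const_lt (u := a) (by linarith)] with l hl
      exact hl.trans (hrmax l _ ⟨by linarith, by linarith⟩)
    · exact Eventually.of_forall fun l => ((hle l _ (hr l).1).trans_lt (hr l).2).trans ha
  · intro r hr hlim
    refine tendsto_order.2 ⟨fun a ha => ?_, fun a ha => ?_⟩
    · filter_upwards [hlim.eventually_const_lt ha] with l hl
      exact hl.trans_le (hle l _ (hr l))
    · obtain ⟨ε, hε⟩ : ∃ ε, ε = min (a - k) (k / 2) := ⟨_, rfl⟩
      have hε0 : 0 < ε := by rw [hε]; exact lt_min (by linarith) (by linarith)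
      have hε1 : ε ≤ a - k := hε ▸ min_le_left _ _
      have hε2 : ε ≤ k / 2 := hε ▸ min_le_right _ _
      have hG := (hconv ε ⟨hε0, by linarith⟩).2
      have hup : Tendsto (fun l => A + (1 - G l (k + ε)) * M) atTop
          (nhds (A + (1 - 1) * M)) :=
        ((hG.const_sub 1).mul_const M).const_add A
      filter_upwards [hup.eventually_lt hlim (by linarith)] with l hl
      by_contra! hra
      have hmono := hG_mono l (show k + ε ≤ r l by linarith)
      obtain ⟨hg0, hg1⟩ := hG_range l (r l)
      have hGA : G l (r l) * A ≤ A := mul_le_of_le_one_left hA0 hg1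
      have hsale : (1 - G l (r l)) * r l ≤ (1 - G l (r l)) * M := by
        rcases le_total M (r l) with h | h
        · simp [hG_one l _ h]
        · exact mul_le_mul_of_nonneg_left h (by linarith)
      have hM : (1 - G l (r l)) * M ≤ (1 - G l (k + ε)) * M :=
        mul_le_mul_of_nonneg_right (by linarith) (by linarith)
      rw [hR] at hl
      linarith
end

section
/- (Undershooting.) Assume the second-price-with-reserve setting below with constants A ∈ [0,v̄] and B ∈ [0,v̄], and let (r_l) be a sequence of reserve prices with r_l ≥ v̄ for all l and lim_{l→∞} r_l = r̄ for some r̄ ∈ (v̄, k). Then: lim_{l→∞} G_l(r_l) = 0; lim_{l→∞} E[w_l | w_l ≥ r_l] = k (the conditional expectation being well defined for all large l since G_l(r_l) < 1 eventually); lim_{l→∞} R_l(r_l) = r̄ < k; and lim_{l→∞} S_l(r_l) = k. -/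
/-!
Everything reduces to `J_l = ∫_{w_l ≥ r_l} w_l → k` together with `G_l(r_l) → 0`. The latter holds
because `r_l ≤ k - ε` eventually, for a small `ε`. For `J_l`, keeping only the event `w_l > k - ε`
gives `J_l ≥ (k - ε) (1 - G_l(k - ε))`, and splitting at `k + ε` gives
`J_l ≤ (k + ε) + M (1 - G_l(k + ε))`; these bounds tend to `k - ε` and `k + ε`
(`le_setIntegral_tail`, `setIntegral_tail_le`).
-/

open MeasureTheory Set Filter

lemma integrable_of_bdd {Ω : Type*} [MeasurableSpace Ω] {μ : Measure Ω} [IsProbabilityMeasure μ]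
    {X : Ω → ℝ} {M : ℝ} (hX : Measurable X) (hb : ∀ᵐ ω ∂μ, X ω ∈ Set.Icc 0 M) :
    Integrable X μ := by
  refine Integrable.of_bound hX.aestronglyMeasurable M ?_
  filter_upwards [hb] with ω hω
  rw [Real.norm_eq_abs, abs_of_nonneg hω.1]
  exact hω.2

lemma measureReal_lt_eq_one_sub {Ω : Type*} [MeasurableSpace Ω] {μ : Measure Ω}
    [IsProbabilityMeasure μ] {X : Ω → ℝ} (hX : Measurable X) (c : ℝ) :
    μ.real {ω | c < X ω} = 1 - (μ {ω | X ω ≤ c}).toReal := by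
  have h := probReal_compl_eq_one_sub (μ := μ) (measurableSet_le hX (measurable_const (a := c)))
  rw [show {ω | X ω ≤ c}ᶜ = {ω | c < X ω} by ext; simp] at h
  exact h

lemma le_setIntegral_tail {Ω : Type*} [MeasurableSpace Ω] {μ : Measure Ω} [IsProbabilityMeasure μ]
    {X : Ω → ℝ} {M : ℝ} (hX : Measurable X) (hb : ∀ᵐ ω ∂μ, X ω ∈ Set.Icc 0 M)
    {r c : ℝ} (hrc : r ≤ c) :
    c * (1 - (μ {ω | X ω ≤ c}).toReal) ≤ ∫ ω in {ω | r ≤ X ω}, X ω ∂μ := by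
  have hi := integrable_of_bdd hX hb
  rw [← measureReal_lt_eq_one_sub hX c]
  have hm : MeasurableSet {ω | c < X ω} := measurableSet_lt measurable_const hX
  calc c * μ.real {ω | c < X ω} = ∫ ω in {ω | c < X ω}, c ∂μ := by simp [mul_comm]
    _ ≤ ∫ ω in {ω | c < X ω}, X ω ∂μ :=
        setIntegral_mono_on (integrable_const c).integrableOn hi.integrableOn hm
          fun ω hω => le_of_lt hω
    _ ≤ _ := by
        refine setIntegral_mono_set hi.integrableOn ?_ ?_
        · filter_upwards [ae_restrict_of_ae hb] with ω hω using hω.1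
        · exact Eventually.of_forall fun ω hω => hrc.trans (le_of_lt hω)

lemma setIntegral_tail_le {Ω : Type*} [MeasurableSpace Ω] {μ : Measure Ω} [IsProbabilityMeasure μ]
    {X : Ω → ℝ} {M : ℝ} (hX : Measurable X) (hb : ∀ᵐ ω ∂μ, X ω ∈ Set.Icc 0 M)
    {c : ℝ} (hc : 0 ≤ c) (r : ℝ) :
    ∫ ω in {ω | r ≤ X ω}, X ω ∂μ ≤ c + M * (1 - (μ {ω | X ω ≤ c}).toReal) := by
  have hi := integrable_of_bdd hX hb
  rw [← measureReal_lt_eq_one_sub hX c]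
  have hm : MeasurableSet {ω | c < X ω} := measurableSet_lt measurable_const hX
  have hind : Integrable ({ω | c < X ω}.indicator fun _ => M) μ := (integrable_const M).indicator hm
  calc ∫ ω in {ω | r ≤ X ω}, X ω ∂μ ≤ ∫ ω, X ω ∂μ :=
        setIntegral_le_integral hi (by filter_upwards [hb] with ω hω using hω.1)
    _ ≤ ∫ ω, (c + {ω | c < X ω}.indicator (fun _ => M) ω) ∂μ := by
        refine integral_mono_ae hi ((integrable_const c).add hind) ?_
        filter_upwards [hb] with ω hω
        by_cases h : c < X ω
        · simp only [indicator, mem_ofPred_eq, h, if_true]; linarith [hω.2]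
        · simp only [indicator, mem_ofPred_eq, h, if_false]; linarith
    _ = c + M * μ.real {ω | c < X ω} := by
        rw [integral_add (integrable_const c) hind, integral_indicator hm]
        simp [mul_comm]

/-- (Undershooting.) In the second-price-with-reserve setting, with
constants `A = E[v_{2:N}] ∈ [0, v̄]` and `B = E[v_{1:N}] ∈ [0, v̄]`, let `(r_l)` be
reserve prices with `r_l ≥ v̄` and `r_l → r̄ ∈ (v̄, k)`. Then `G_l(r_l) → 0`;
`E[w_l | w_l ≥ r_l] = E[w_l·1{w_l ≥ r_l}]/(1 − G_l(r_l)) → k` (the conditional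
expectation being well defined for large `l` since `G_l(r_l) < 1` eventually);
`R_l(r_l) = G_l(r_l)·A + (1 − G_l(r_l))·r_l → r̄ < k`; and
`S_l(r_l) = G_l(r_l)·B + (1 − G_l(r_l))·E[w_l | w_l ≥ r_l] → k`. -/
theorem stmt17
    (vbar k M A B : ℝ) (h1 : 0 < vbar) (h2 : vbar < k) (h3 : k ≤ M)
    (hA : A ∈ Set.Icc 0 vbar) (hB : B ∈ Set.Icc 0 vbar)
    (Ω : Type*) [MeasurableSpace Ω] (μ : Measure Ω) [IsProbabilityMeasure μ]
    (w : ℕ → Ω → ℝ)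
    (hw_meas : ∀ l, Measurable (w l))
    (hw_bd : ∀ l, ∀ᵐ ω ∂μ, w l ω ∈ Set.Icc 0 M)
    (G : ℕ → ℝ → ℝ)
    (hG : ∀ l x, G l x = (μ {ω | w l ω ≤ x}).toReal)
    (hG_cont : ∀ l, Continuous (G l))
    (hconv : ∀ ε ∈ Set.Ioo 0 k,
      Filter.Tendsto (fun l => G l (k - ε)) Filter.atTop (nhds 0) ∧
      Filter.Tendsto (fun l => G l (k + ε)) Filter.atTop (nhds 1))
    (r : ℕ → ℝ) (rbar : ℝ)
    (hr : ∀ l, vbar ≤ r l)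
    (hr_lim : Filter.Tendsto r Filter.atTop (nhds rbar))
    (hrbar : rbar ∈ Set.Ioo vbar k) :
    Filter.Tendsto (fun l => G l (r l)) Filter.atTop (nhds 0) ∧
    (∀ᶠ l in Filter.atTop, G l (r l) < 1) ∧
    Filter.Tendsto
      (fun l => (∫ ω in {ω | r l ≤ w l ω}, w l ω ∂μ) / (1 - G l (r l)))
      Filter.atTop (nhds k) ∧
    Filter.Tendsto (fun l => G l (r l) * A + (1 - G l (r l)) * r l)
      Filter.atTop (nhds rbar) ∧
    rbar < k ∧
    Filter.Tendsto
      (fun l => G l (r l) * B +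
        (1 - G l (r l)) * ((∫ ω in {ω | r l ≤ w l ω}, w l ω ∂μ) / (1 - G l (r l))))
      Filter.atTop (nhds k) := by
  obtain ⟨hr1, hr2⟩ := hrbar
  have hk : 0 < k := h1.trans h2
  have hG0 : Tendsto (fun l => G l (r l)) atTop (nhds 0) := by
    have hε : (k - rbar) / 2 ∈ Set.Ioo 0 k := ⟨by linarith, by linarith⟩
    have hev : ∀ᶠ l in atTop, r l ≤ k - (k - rbar) / 2 :=
      hr_lim.eventually_le_const (by linarith)
    refine tendsto_of_tendsto_of_tendsto_of_le_of_le' tendsto_const_nhds (hconv _ hε).1 ?_ ?_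
    · exact Eventually.of_forall fun l => by rw [hG]; positivity
    · filter_upwards [hev] with l hl
      rw [hG, hG]
      exact measureReal_mono fun ω hω => le_trans hω hl
  have hlt : ∀ᶠ l in atTop, G l (r l) < 1 := hG0.eventually_lt_const one_pos
  have hJ : Tendsto (fun l => ∫ ω in {ω | r l ≤ w l ω}, w l ω ∂μ) atTop (nhds k) := by
    refine tendsto_order.2 ⟨fun a ha => ?_, fun a ha => ?_⟩
    · obtain ⟨c, hc1, hc2⟩ := exists_between (max_lt ha hr2)
      have hca := (le_max_left _ _).trans_lt hc1
      have hcr := (le_max_right _ _).trans_lt hc1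
      have hlim := (hconv (k - c) ⟨by linarith, by linarith⟩).1
      rw [sub_sub_cancel] at hlim
      have hlim' : Tendsto (fun l => c * (1 - G l c)) atTop (nhds c) := by
        simpa using (hlim.const_sub 1).const_mul c
      filter_upwards [hlim'.eventually_const_lt hca, hr_lim.eventually_le_const hcr] with l hl hrl
      rw [hG] at hl
      exact hl.trans_le (le_setIntegral_tail (hw_meas l) (hw_bd l) hrl)
    · -- `hconv` only covers `ε < k`, so the cut-off is also kept below `2 * k`
      obtain ⟨c, hc1, hc2⟩ := exists_between (lt_min ha (by linarith : k < 2 * k))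
      have hca := hc2.trans_le (min_le_left _ _)
      have hck := hc2.trans_le (min_le_right _ _)
      have hlim := (hconv (c - k) ⟨by linarith, by linarith⟩).2
      rw [add_sub_cancel] at hlim
      have hlim' : Tendsto (fun l => c + M * (1 - G l c)) atTop (nhds c) := by
        simpa using ((hlim.const_sub 1).const_mul M).const_add c
      filter_upwards [hlim'.eventually_lt_const hca] with l hl
      rw [hG] at hl
      exact (setIntegral_tail_le (hw_meas l) (hw_bd l) (by linarith) (r l)).trans_lt hl
  have h1G : Tendsto (fun l => 1 - G l (r l)) atTop (nhds 1) := by simpa using hG0.const_sub 1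
  refine ⟨hG0, hlt, ?_, ?_, hr2, ?_⟩
  · rw [← div_one k]
    exact hJ.div h1G one_ne_zero
  · simpa using (hG0.mul_const A).add (h1G.mul hr_lim)
  · simpa using (hG0.mul_const B).add (h1G.mul (hJ.div h1G one_ne_zero))
end

section
/- (Convergence From Below.) Fix p ∈ [0,1], reals 0 < v̄ < k, and constants A, B ∈ ℝ. Then there exist M ≥ k, a sequence of random variables (w_l) where each w_l takes values in [0, w̄_l] with w̄_l ∈ (0,M], has a continuous strictly positive density on [0, w̄_l] with CDF G_l and mean at least v̄, such that: (i) w_l converges in distribution to the constant k, i.e. for every ε ∈ (0,k), G_l(k−ε) → 0 and G_l(k+ε) → 1; (ii) for all 0 < c₁ < c₂ < k, (G_l(c₂) − G_l(c₁))/G_l(c₂) → 0; and there exists a sequence of reserve prices (r_l) with r_l < k for every l and lim_{l→∞} r_l = k, for which lim_{l→∞} G_l(r_l) = p, lim_{l→∞} [G_l(r_l)·A + (1 − G_l(r_l))·r_l] = p·A + (1−p)·k, and lim_{l→∞} [G_l(r_l)·B + E[w_l·1{w_l ≥ r_l}]] = p·B + (1−p)·k. -/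
/-!
The witness is a two-piece mixture on the fixed support `[0, k]`. With `a = 1 / (l + 2)`, give
weight `a` to the CDF `1 - (1 - x / k) ^ (l + 1)`, which concentrates at `0`, and weight `1 - a` to
the CDF `(x / k) ^ (l + 1)`, which concentrates at `k`. Since `a → 0`, the mixture converges to the
constant `k`. At a fixed `c ∈ (0, k)` the second piece contributes a geometrically small amount,
which is negligible against the polynomially small `a`; hence `G_l c / a → 1`
(`tendsto_mixCDF_div_weight`), and this gives both `G_l c → 0` and the slow drainage of low values.

The reserve price is `r_l = k * y ^ (1 / (l + 1))`, where `y ∈ [a, 1 - a]` tends to `p`: the second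
piece equals exactly `y` there, so `G_l r_l → p`, and `y ≥ a` is large enough to force `r_l → k`
even when `p = 0`. For the surplus, `r (1 - G r) ≤ ∫ x in r..k, x g(x) ≤ k (1 - G r)`; the
same lower bound at a fixed `c ∈ (v̄, k)` shows that the means eventually exceed `v̄`, so it suffices
to drop finitely many terms of the sequence.
-/

open MeasureTheory intervalIntegral Set Filter

/-- The weight of the low-value component of the mixture. -/
noncomputable def lowWeight (l : ℕ) : ℝ := 1 / ((l : ℝ) + 2)

/-- The mixture CDF on `[0, k]`; outside that interval it is only a polynomial. -/
noncomputable def mixCDF (k : ℝ) (l : ℕ) (x : ℝ) : ℝ :=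
  lowWeight l * (1 - (1 - x / k) ^ (l + 1)) + (1 - lowWeight l) * (x / k) ^ (l + 1)

/-- The density of the mixture, i.e. the derivative of `mixCDF`. -/
noncomputable def mixDensity (k : ℝ) (l : ℕ) (x : ℝ) : ℝ :=
  (((l : ℝ) + 1) / k) * (lowWeight l * (1 - x / k) ^ l + (1 - lowWeight l) * (x / k) ^ l)

/-- A number tending to `p`, kept in `[a, 1 - a]` for `a = lowWeight l`. -/
noncomputable def quantileLevel (p : ℝ) (l : ℕ) : ℝ :=
  p * (1 - 2 * lowWeight l) + lowWeight l

/-- The reserve price: the `quantileLevel`-quantile of the high-value component. -/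
noncomputable def reservePrice (p k : ℝ) (l : ℕ) : ℝ :=
  k * quantileLevel p l ^ (((l + 1 : ℕ) : ℝ)⁻¹)

lemma lowWeight_pos (l : ℕ) : 0 < lowWeight l := by unfold lowWeight; positivity

lemma lowWeight_le_half (l : ℕ) : lowWeight l ≤ 1 / 2 := by
  unfold lowWeight
  apply one_div_le_one_div_of_le (by norm_num)
  have : (0 : ℝ) ≤ l := by positivity
  linarith

lemma tendsto_lowWeight : Tendsto lowWeight atTop (nhds 0) := by
  unfold lowWeight
  simp only [one_div]
  exact tendsto_inv_atTop_zero.comp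
    (tendsto_atTop_add_const_right _ _ tendsto_natCast_atTop_atTop)

lemma mixCDF_zero (k : ℝ) (l : ℕ) : mixCDF k l 0 = 0 := by simp [mixCDF]

lemma mixCDF_self {k : ℝ} (hk : 0 < k) (l : ℕ) : mixCDF k l k = 1 := by
  simp [mixCDF, hk.ne']

lemma hasDerivAt_mixCDF (k : ℝ) (l : ℕ) (x : ℝ) :
    HasDerivAt (mixCDF k l) (mixDensity k l x) x := by
  have h1 : HasDerivAt (fun x : ℝ => x / k) (1 / k) x := (hasDerivAt_id x).div_const k
  have h2 := ((((h1.const_sub 1).pow (l + 1)).const_sub 1).const_mul (lowWeight l)).add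
    ((h1.pow (l + 1)).const_mul (1 - lowWeight l))
  have h3 : HasDerivAt (mixCDF k l) _ x := h2
  convert h3 using 1
  simp only [mixDensity, Nat.add_sub_cancel]
  push_cast
  ring

lemma continuous_mixDensity (k : ℝ) (l : ℕ) : Continuous (mixDensity k l) := by
  unfold mixDensity; fun_prop

lemma integral_mixDensity (k : ℝ) (l : ℕ) (x y : ℝ) :
    ∫ t in x..y, mixDensity k l t = mixCDF k l y - mixCDF k l x :=
  integral_eq_sub_of_hasDerivAt (fun t _ => hasDerivAt_mixCDF k l t)
    ((continuous_mixDensity k l).intervalIntegrable _ _)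

lemma mixDensity_pos {k : ℝ} (hk : 0 < k) (l : ℕ) {x : ℝ} (hx : x ∈ Icc 0 k) :
    0 < mixDensity k l x := by
  have ha := lowWeight_pos l
  have ha' := lowWeight_le_half l
  have hq : 0 ≤ x / k := div_nonneg hx.1 hk.le
  have hq' : x / k ≤ 1 := (div_le_one hk).2 hx.2
  unfold mixDensity
  apply mul_pos (by positivity)
  -- At least one of the two components is positive at `x`.
  rcases hq.eq_or_lt with h | h
  · rw [← h]
    have : (0 : ℝ) ≤ 0 ^ l := by positivity
    simp only [sub_zero, one_pow, mul_one]
    nlinarith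
  · have h1 : 0 ≤ (1 - x / k) ^ l := pow_nonneg (by linarith) l
    have h2 : 0 < (x / k) ^ l := pow_pos h l
    nlinarith [mul_nonneg ha.le h1, mul_pos (show 0 < 1 - lowWeight l by linarith) h2]

lemma tendsto_mixCDF_div_weight {k c : ℝ} (hc : 0 < c) (hck : c < k) :
    Tendsto (fun l => mixCDF k l c / lowWeight l) atTop (nhds 1) := by
  have hk : 0 < k := hc.trans hck
  have hq : 0 < c / k := div_pos hc hk
  have hq' : c / k < 1 := (div_lt_one hk).2 hck
  have t1 : Tendsto (fun l : ℕ => (1 - c / k) ^ (l + 1)) atTop (nhds 0) :=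
    (tendsto_pow_atTop_nhds_zero_of_lt_one (by linarith) (by linarith)).comp
      (tendsto_add_atTop_nat 1)
  have t2 : Tendsto (fun l : ℕ => ((l + 1 : ℕ) : ℝ) * (c / k) ^ (l + 1)) atTop (nhds 0) :=
    (tendsto_self_mul_const_pow_of_lt_one hq.le hq').comp (tendsto_add_atTop_nat 1)
  have t := (t1.const_sub 1).add t2
  rw [sub_zero, add_zero] at t
  refine t.congr fun l => ?_
  have : (l : ℝ) + 2 ≠ 0 := by positivity
  unfold mixCDF lowWeight
  push_cast
  field_simp
  ring

lemma tendsto_mixCDF {k c : ℝ} (hc : 0 < c) (hck : c < k) :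
    Tendsto (fun l => mixCDF k l c) atTop (nhds 0) := by
  have t := (tendsto_mixCDF_div_weight hc hck).mul tendsto_lowWeight
  rw [mul_zero] at t
  exact t.congr fun l => div_mul_cancel₀ _ (lowWeight_pos l).ne'

lemma tendsto_mixCDF_ratio {k c₁ c₂ : ℝ} (h1 : 0 < c₁) (h12 : c₁ < c₂) (h2 : c₂ < k) :
    Tendsto (fun l => (mixCDF k l c₂ - mixCDF k l c₁) / mixCDF k l c₂) atTop (nhds 0) := by
  have t1 := tendsto_mixCDF_div_weight h1 (h12.trans h2)
  have t2 := tendsto_mixCDF_div_weight (h1.trans h12) h2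
  have t := (t2.sub t1).div t2 one_ne_zero
  rw [sub_self, zero_div] at t
  refine t.congr fun l => ?_
  simp only [Pi.div_apply]
  rw [← sub_div, div_div_div_cancel_right₀ (lowWeight_pos l).ne']

lemma integral_id_mul_mixDensity_ge {k c : ℝ} (hk : 0 < k) (hc : 0 ≤ c) (hck : c ≤ k) (l : ℕ) :
    c * (1 - mixCDF k l c) ≤ ∫ x in c..k, x * mixDensity k l x := by
  have hcont := continuous_mixDensity k l
  rw [← mixCDF_self hk l, ← integral_mixDensity, ← intervalIntegral.integral_const_mul]
  refine integral_mono_on hck ((hcont.const_mul c).intervalIntegrable _ _)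
    ((continuous_id.mul hcont).intervalIntegrable _ _) fun x hx => ?_
  exact mul_le_mul_of_nonneg_right hx.1 (mixDensity_pos hk l ⟨hc.trans hx.1, hx.2⟩).le

lemma integral_id_mul_mixDensity_le {k c : ℝ} (hk : 0 < k) (hc : 0 ≤ c) (hck : c ≤ k) (l : ℕ) :
    ∫ x in c..k, x * mixDensity k l x ≤ k * (1 - mixCDF k l c) := by
  have hcont := continuous_mixDensity k l
  rw [← mixCDF_self hk l, ← integral_mixDensity, ← intervalIntegral.integral_const_mul]
  refine integral_mono_on hck ((continuous_id.mul hcont).intervalIntegrable _ _)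
    ((hcont.const_mul k).intervalIntegrable _ _) fun x hx => ?_
  exact mul_le_mul_of_nonneg_right hx.2 (mixDensity_pos hk l ⟨hc.trans hx.1, hx.2⟩).le

lemma eventually_le_mean {vbar k : ℝ} (h1 : 0 < vbar) (h2 : vbar < k) :
    ∀ᶠ l in atTop, vbar ≤ ∫ x in (0 : ℝ)..k, x * mixDensity k l x := by
  have hk : 0 < k := h1.trans h2
  obtain ⟨c, hvc, hck⟩ := exists_between h2
  have hc : 0 < c := h1.trans hvc
  have t := ((tendsto_mixCDF hc hck).const_sub 1).const_mul c
  rw [sub_zero, mul_one] at t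
  filter_upwards [t.eventually (lt_mem_nhds hvc)] with l hl
  have hint : ∀ a b : ℝ, IntervalIntegrable (fun x => x * mixDensity k l x) volume a b :=
    fun a b => (continuous_id.mul (continuous_mixDensity k l)).intervalIntegrable _ _
  rw [← integral_add_adjacent_intervals (hint 0 c) (hint c k)]
  have h0 : 0 ≤ ∫ x in (0 : ℝ)..c, x * mixDensity k l x :=
    integral_nonneg hc.le fun x hx =>
      mul_nonneg hx.1 (mixDensity_pos hk l ⟨hx.1, hx.2.trans hck.le⟩).le
  linarith [integral_id_mul_mixDensity_ge hk hc.le hck.le l]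

lemma lowWeight_le_quantileLevel {p : ℝ} (hp : p ∈ Icc (0 : ℝ) 1) (l : ℕ) :
    lowWeight l ≤ quantileLevel p l := by
  have := lowWeight_le_half l
  unfold quantileLevel
  nlinarith [mul_nonneg hp.1 (show 0 ≤ 1 - 2 * lowWeight l by linarith)]

lemma quantileLevel_lt_one {p : ℝ} (hp : p ∈ Icc (0 : ℝ) 1) (l : ℕ) :
    quantileLevel p l < 1 := by
  have := lowWeight_le_half l
  have := lowWeight_pos l
  unfold quantileLevel
  nlinarith [mul_nonneg (sub_nonneg.2 hp.2) (show 0 ≤ 1 - 2 * lowWeight l by linarith)]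

lemma tendsto_quantileLevel (p : ℝ) : Tendsto (quantileLevel p) atTop (nhds p) := by
  have t := (((tendsto_lowWeight.const_mul 2).const_sub 1).const_mul p).add tendsto_lowWeight
  rw [mul_zero, sub_zero, mul_one, add_zero] at t
  exact t

lemma reservePrice_mem {p k : ℝ} (hp : p ∈ Icc (0 : ℝ) 1) (hk : 0 < k) (l : ℕ) :
    reservePrice p k l ∈ Ioo 0 k := by
  have hy : 0 < quantileLevel p l := (lowWeight_pos l).trans_le (lowWeight_le_quantileLevel hp l)
  refine ⟨mul_pos hk (Real.rpow_pos_of_pos hy _), ?_⟩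
  exact mul_lt_of_lt_one_right hk
    (Real.rpow_lt_one hy.le (quantileLevel_lt_one hp l) (by positivity))

lemma tendsto_reservePrice {p : ℝ} (hp : p ∈ Icc (0 : ℝ) 1) (k : ℝ) :
    Tendsto (reservePrice p k) atTop (nhds k) := by
  -- The lower bound `a ^ (1 / (l + 1))`, with `a = 1 / x` and `x = l + 2`, is `x ^ (-1 / (x - 1))`.
  have t : Tendsto (fun l : ℕ => lowWeight l ^ (((l + 1 : ℕ) : ℝ)⁻¹)) atTop (nhds 1) := by
    have h := (tendsto_rpow_div_mul_add (-1) 1 (-1) zero_ne_one).comp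
      (tendsto_atTop_add_const_right atTop (2 : ℝ) (tendsto_natCast_atTop_atTop (R := ℝ)))
    refine h.congr fun l => ?_
    have hpos : (0 : ℝ) ≤ (l : ℝ) + 2 := by positivity
    simp only [Function.comp, lowWeight, one_div]
    rw [Real.inv_rpow hpos, ← Real.rpow_neg hpos]
    congr 1
    push_cast
    rw [neg_div, one_div]
    congr 2
    ring
  have ts : Tendsto (fun l : ℕ => quantileLevel p l ^ (((l + 1 : ℕ) : ℝ)⁻¹)) atTop (nhds 1) := by
    refine tendsto_of_tendsto_of_tendsto_of_le_of_le t tendsto_const_nhds (fun l => ?_) fun l => ?_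
    · exact Real.rpow_le_rpow (lowWeight_pos l).le (lowWeight_le_quantileLevel hp l)
        (by positivity)
    · exact Real.rpow_le_one
        ((lowWeight_pos l).le.trans (lowWeight_le_quantileLevel hp l))
        (quantileLevel_lt_one hp l).le (by positivity)
  have h := ts.const_mul k
  rw [mul_one] at h
  exact h

lemma tendsto_mixCDF_reservePrice {p k : ℝ} (hp : p ∈ Icc (0 : ℝ) 1) (hk : 0 < k) :
    Tendsto (fun l => mixCDF k l (reservePrice p k l)) atTop (nhds p) := by
  have hlow : Tendsto (fun l => lowWeight l * (1 - (1 - reservePrice p k l / k) ^ (l + 1)))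
      atTop (nhds 0) := by
    refine squeeze_zero (fun l => ?_) (fun l => ?_) tendsto_lowWeight
    all_goals
      have hr := reservePrice_mem hp hk l
      have h0 : 0 < reservePrice p k l / k := div_pos hr.1 hk
      have h1 : reservePrice p k l / k < 1 := (div_lt_one hk).2 hr.2
    · exact mul_nonneg (lowWeight_pos l).le
        (sub_nonneg.2 (pow_le_one₀ (by linarith) (by linarith)))
    · refine mul_le_of_le_one_right (lowWeight_pos l).le ?_
      have : 0 ≤ (1 - reservePrice p k l / k) ^ (l + 1) := pow_nonneg (by linarith) _
      linarith
  have t := hlow.add ((tendsto_lowWeight.const_sub 1).mul (tendsto_quantileLevel p))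
  rw [sub_zero, one_mul, zero_add] at t
  refine t.congr fun l => ?_
  have hy : 0 ≤ quantileLevel p l := (lowWeight_pos l).le.trans (lowWeight_le_quantileLevel hp l)
  have hs : (reservePrice p k l / k) ^ (l + 1) = quantileLevel p l := by
    rw [reservePrice, mul_div_cancel_left₀ _ hk.ne', Real.rpow_inv_natCast_pow hy l.succ_ne_zero]
  rw [mixCDF, hs]

lemma tendsto_surplus {p k : ℝ} (hp : p ∈ Icc (0 : ℝ) 1) (hk : 0 < k) :
    Tendsto (fun l => ∫ x in (reservePrice p k l)..k, x * mixDensity k l x) atTop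
      (nhds ((1 - p) * k)) := by
  have tG := (tendsto_mixCDF_reservePrice hp hk).const_sub 1
  have tlo := (tendsto_reservePrice hp k).mul tG
  have thi := tG.const_mul k
  rw [mul_comm k] at tlo thi
  refine tendsto_of_tendsto_of_tendsto_of_le_of_le tlo thi (fun l => ?_) fun l => ?_
  all_goals have hr := reservePrice_mem hp hk l
  · exact integral_id_mul_mixDensity_ge hk hr.1.le hr.2.le l
  · exact integral_id_mul_mixDensity_le hk hr.1.le hr.2.le l

/-- (Convergence From Below.) Fix `p ∈ [0,1]`, reals `0 < v̄ < k`, and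
constants `A, B` (the expected second-highest and highest of the weak bidders' values).
Then there exist `M ≥ k` and a sequence of strong-bidder value distributions — given by
continuous strictly positive densities `g_l` on `[0, w̄_l]` with `w̄_l ∈ (0, M]`, mean at
least `v̄`, and CDFs `G_l x = ∫₀^{min(max(x,0), w̄_l)} g_l` — such that (i) `w_l`
converges in distribution to the constant `k`, (ii) mass is drained from low values slowly
(`(G_l(c₂) − G_l(c₁))/G_l(c₂) → 0` for `0 < c₁ < c₂ < k`), and yet there is a sequence of
reserve prices `r_l < k` with `r_l → k` for which `G_l(r_l) → p`, the expected revenue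
`G_l(r_l)·A + (1 − G_l(r_l))·r_l → p·A + (1−p)·k`, and the expected surplus
`G_l(r_l)·B + E[w_l·1{w_l ≥ r_l}] → p·B + (1−p)·k`, where
`E[w_l·1{w_l ≥ r_l}] = ∫_{r_l}^{w̄_l} ξ g_l(ξ) dξ`. -/
theorem stmt19
    (p : ℝ) (hp : p ∈ Set.Icc 0 1)
    (vbar k : ℝ) (h1 : 0 < vbar) (h2 : vbar < k)
    (A B : ℝ) :
    ∃ M : ℝ, k ≤ M ∧
    ∃ (wbar : ℕ → ℝ) (g : ℕ → ℝ → ℝ) (G : ℕ → ℝ → ℝ),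
      (∀ l, wbar l ∈ Set.Ioc 0 M ∧
        ContinuousOn (g l) (Set.Icc 0 (wbar l)) ∧
        (∀ x ∈ Set.Icc 0 (wbar l), 0 < g l x) ∧
        (∫ x in (0:ℝ)..(wbar l), g l x) = 1 ∧
        vbar ≤ ∫ x in (0:ℝ)..(wbar l), x * g l x) ∧
      (∀ l x, G l x = ∫ ξ in (0:ℝ)..(min (max x 0) (wbar l)), g l ξ) ∧
      (∀ ε ∈ Set.Ioo 0 k,
        Filter.Tendsto (fun l => G l (k - ε)) Filter.atTop (nhds 0) ∧
        Filter.Tendsto (fun l => G l (k + ε)) Filter.atTop (nhds 1)) ∧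
      (∀ c₁ c₂, 0 < c₁ → c₁ < c₂ → c₂ < k →
        Filter.Tendsto (fun l => (G l c₂ - G l c₁) / G l c₂) Filter.atTop (nhds 0)) ∧
      ∃ r : ℕ → ℝ,
        (∀ l, r l < k) ∧
        Filter.Tendsto r Filter.atTop (nhds k) ∧
        Filter.Tendsto (fun l => G l (r l)) Filter.atTop (nhds p) ∧
        Filter.Tendsto (fun l => G l (r l) * A + (1 - G l (r l)) * r l)
          Filter.atTop (nhds (p * A + (1 - p) * k)) ∧
        Filter.Tendsto
          (fun l => G l (r l) * B + ∫ ξ in (r l)..(wbar l), ξ * g l ξ)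
          Filter.atTop (nhds (p * B + (1 - p) * k)) := by
  have hk : 0 < k := h1.trans h2
  obtain ⟨N, hN⟩ := eventually_atTop.1 (eventually_le_mean h1 h2)
  have hG : ∀ l, ∀ x ∈ Icc 0 k, mixCDF k l (min (max x 0) k) = mixCDF k l x := by
    intro l x hx
    rw [max_eq_left hx.1, min_eq_left hx.2]
  have shift : Tendsto (fun l => l + N) atTop atTop := tendsto_add_atTop_nat N
  have hr := fun l => reservePrice_mem hp hk (l + N)
  have tr := (tendsto_reservePrice hp k).comp shift
  have tG := (tendsto_mixCDF_reservePrice hp hk).comp shift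
  have tS := (tendsto_surplus hp hk).comp shift
  simp only [Function.comp_def] at tr tG tS
  have hGr : ∀ l, mixCDF k (l + N) (min (max (reservePrice p k (l + N)) 0) k) =
      mixCDF k (l + N) (reservePrice p k (l + N)) :=
    fun l => hG _ _ ⟨(hr l).1.le, (hr l).2.le⟩
  refine ⟨k, le_rfl, fun _ => k, fun l => mixDensity k (l + N),
    fun l x => mixCDF k (l + N) (min (max x 0) k), fun l => ⟨⟨hk, le_rfl⟩,
      (continuous_mixDensity k _).continuousOn, fun x hx => mixDensity_pos hk _ hx, ?_,
      hN _ (Nat.le_add_left N l)⟩, fun l x => ?_, fun ε hε => ⟨?_, ?_⟩,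
    fun c₁ c₂ hc₁ h12 hc₂ => ?_, fun l => reservePrice p k (l + N), fun l => (hr l).2, tr,
    ?_, ?_, ?_⟩
  · rw [integral_mixDensity, mixCDF_self hk, mixCDF_zero, sub_zero]
  · rw [integral_mixDensity, mixCDF_zero, sub_zero]
  · refine ((tendsto_mixCDF (sub_pos.2 hε.2) (sub_lt_self k hε.1)).comp shift).congr fun l => ?_
    exact (hG _ _ ⟨(sub_pos.2 hε.2).le, (sub_lt_self k hε.1).le⟩).symm
  · have hmin : min (max (k + ε) 0) k = k :=
      min_eq_right ((le_add_of_nonneg_right hε.1.le).trans (le_max_left _ _))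
    simp only [hmin, mixCDF_self hk]
    exact tendsto_const_nhds
  · refine ((tendsto_mixCDF_ratio hc₁ h12 hc₂).comp shift).congr fun l => ?_
    simp only [Function.comp]
    rw [hG _ c₁ ⟨hc₁.le, (h12.trans hc₂).le⟩, hG _ c₂ ⟨(hc₁.trans h12).le, hc₂.le⟩]
  · simp only [hGr]
    exact tG
  · simp only [hGr]
    exact (tG.mul_const A).add ((tG.const_sub 1).mul tr)
  · simp only [hGr]
    exact (tG.mul_const B).add tS
end
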